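/- arXiv:2003.11400 — 3 statements merged into one kernel-verified Lean document; each statement's English description precedes it below -/
import Mathlib

section
/- Let T > 0 and k ≥ 1. For each 1 ≤ i ≤ k let n_i ≥ 1 and 0 = t_{i,0} < t_{i,1} < … < t_{i,n_i−1} < t_{i,n_i} = T, and for each N let n_i^N ≥ 1 and 0 = t_{i,0}^N < t_{i,1}^N < … < t_{i,n_i^N−1}^N < t_{i,n_i^N}^N = T. Define g, g_N : [0,T] → ℝ^k by: the i-th coordinate of g(t) equals j for t ∈ [t_{i,j}, t_{i,j+1}) (0 ≤ j ≤ n_i − 1) and g(T)_i = n_i − 1; and analogously for g_N with the times t_{i,j}^N. Assume: (1) there is a dense subset A ⊆ [0,T] with T ∈ A such that g_N(t) → g(t) for every t ∈ A; (2) for all i₁ ≠ i₂ and all 1 ≤ j₁ ≤ n_{i₁} − 1, 1 ≤ j₂ ≤ n_{i₂} − 1, one has t_{i₁,j₁} ≠ t_{i₂,j₂}. Then: for all N large enough, n_i^N = n_i for every i; for every i and every 1 ≤ j ≤ n_i − 1, t_{i,j}^N → t_{i,j} as N → ∞; and there exist continuous, strictly increasing bijections λ_N : [0,T] → [0,T]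 such that sup_{t∈[0,T]} |λ_N(t) − t| → 0 and, for all N large enough, g_N = g ∘ λ_N on [0,T]. In particular g_N converges to g in the Skorokhod sense on [0,T]. -/
open MeasureTheory Filter Topology Set

noncomputable section

/-- Skorokhod convergence on `[0,T]`: there are continuous strictly increasing bijections
`λ_N : [0,T] → [0,T]` with `sup |λ_N - id| → 0` and `sup ‖g_N - g ∘ λ_N‖ → 0`
(the norm on `ℝ^k = Fin k → ℝ` being the supremum norm). -/
def SkorokhodTendstoOn {E : Type*} [NormedAddCommGroup E]
    (x : ℕ → ℝ → E) (y : ℝ → E) (T : ℝ) : Prop :=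
  ∃ lam : ℕ → ℝ → ℝ,
    (∀ k, ContinuousOn (lam k) (Set.Icc 0 T)) ∧
    (∀ k, StrictMonoOn (lam k) (Set.Icc 0 T)) ∧
    (∀ k, Set.BijOn (lam k) (Set.Icc 0 T) (Set.Icc 0 T)) ∧
    (∀ ε > 0, ∀ᶠ k in Filter.atTop, ∀ t ∈ Set.Icc 0 T, |lam k t - t| < ε) ∧
    (∀ ε > 0, ∀ᶠ k in Filter.atTop, ∀ t ∈ Set.Icc 0 T, ‖x k t - y (lam k t)‖ < ε)

/-! Away from the terminal time, a counting function `f` with jump times `u 0 < u 1 < ⋯` satisfies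
`u j ≤ s ↔ j ≤ f s`. As its values are natural numbers, pointwise convergence at `s` means
eventual equality at `s`; at `T` this stabilises the number of jumps, and at points of `A` just
before and just after `t i j` it traps `tN N i j`.

For the time changes, prescribe the displacement `t i j - tN N i j` at each point `tN N i j`.
Limits that are distinct stay separated, and the only points with a common limit are the endpoints,
shared by all coordinates and never displaced; so this is a Lipschitz function on a finite set
whose constant `K` tends to `0`. Extend it to a `K`-Lipschitz function `d` on `ℝ`, by McShane's
theorem. Once `K < 1`, the map `s ↦ s + d s` is strictly increasing, and on `[0, T]` it differs
from the identity by at most `K * T` because `d 0 = 0`. -/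

open scoped NNReal

lemma exists_mem_Ioo_of_Icc_subset_closure {α : Type*} [LinearOrder α] [DenselyOrdered α]
    [TopologicalSpace α] [OrderTopology α] {A : Set α} {a b x y : α}
    (hA : Icc a b ⊆ closure A) (hax : a ≤ x) (hxy : x < y) (hyb : y ≤ b) :
    ∃ z ∈ A, z ∈ Ioo x y := by
  obtain ⟨c, hc⟩ := exists_between hxy
  obtain ⟨z, hz, hzA⟩ := mem_closure_iff.1 (hA ⟨hax.trans hc.1.le, hc.2.le.trans hyb⟩)
    (Ioo x y) isOpen_Ioo hc
  exact ⟨z, hzA, hz⟩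

/-- `f` counts on `[0, T]` the jump times `u 1 < ⋯ < u (n - 1)`, with `u 0 = 0` and `u n = T`.
The endpoint `T` is not counted: `f T = n - 1` is the left limit of `f` at `T`. The values `u j`
with `j > n` and `f s` with `s ∉ [0, T]` are arbitrary. -/
structure IsCountingFunction (T : ℝ) (n : ℕ) (u : ℕ → ℝ) (f : ℝ → ℝ) : Prop where
  one_le : 1 ≤ n
  time_zero : u 0 = 0
  time_last : u n = T
  time_lt_succ : ∀ j < n, u j < u (j + 1)
  eq_of_mem_Ico : ∀ j < n, ∀ s ∈ Ico (u j) (u (j + 1)), f s = j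
  eq_last : f T = n - 1

namespace IsCountingFunction

variable {T s : ℝ} {n j : ℕ} {u : ℕ → ℝ} {f : ℝ → ℝ}

lemma strictMonoOn_time (h : IsCountingFunction T n u f) : StrictMonoOn u (Iic n) :=
  strictMonoOn_Iic_of_lt_succ h.time_lt_succ

lemma time_mem_Icc (h : IsCountingFunction T n u f) (hj : j ≤ n) : u j ∈ Icc 0 T :=
  ⟨h.time_zero ▸ h.strictMonoOn_time.monotoneOn (Nat.zero_le n) hj (Nat.zero_le j),
    h.time_last ▸ h.strictMonoOn_time.monotoneOn hj (le_refl n) hj⟩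

lemma time_mem_Ioo (h : IsCountingFunction T n u f) (hj : j ∈ Ioo 0 n) : u j ∈ Ioo 0 T :=
  ⟨h.time_zero ▸ h.strictMonoOn_time (Nat.zero_le n) hj.2.le hj.1,
    h.time_last ▸ h.strictMonoOn_time hj.2.le (le_refl n) hj.2⟩

lemma exists_mem_Ico (h : IsCountingFunction T n u f) (hs : s ∈ Ico 0 T) :
    ∃ j < n, s ∈ Ico (u j) (u (j + 1)) := by
  rw [← h.time_zero, ← h.time_last] at hs
  simpa only [mem_iUnion, Finset.mem_range, exists_prop] using Ico_subset_biUnion_Ico n u hs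

lemma exists_eq_natCast (h : IsCountingFunction T n u f) (hs : s ∈ Icc 0 T) :
    ∃ m : ℕ, f s = m := by
  rcases hs.2.eq_or_lt with rfl | hsT
  · exact ⟨n - 1, by rw [h.eq_last, Nat.cast_pred h.one_le]⟩
  · obtain ⟨m, hm, hsm⟩ := h.exists_mem_Ico ⟨hs.1, hsT⟩
    exact ⟨m, h.eq_of_mem_Ico m hm s hsm⟩

lemma time_le_iff (h : IsCountingFunction T n u f) (hj : j ≤ n) (hs : s ∈ Ico 0 T) :
    u j ≤ s ↔ (j : ℝ) ≤ f s := by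
  obtain ⟨m, hm, hms, hsm⟩ := h.exists_mem_Ico hs
  rw [h.eq_of_mem_Ico m hm s ⟨hms, hsm⟩, Nat.cast_le]
  have hmono := h.strictMonoOn_time.monotoneOn
  refine ⟨fun hjs => ?_, fun hjm => (hmono hj hm.le hjm).trans hms⟩
  by_contra! hmj
  exact (hsm.trans_le (hmono hm hj hmj)).not_ge hjs

lemma eq_comp {v : ℕ → ℝ} {f' lam : ℝ → ℝ} (h : IsCountingFunction T n u f)
    (h' : IsCountingFunction T n v f') (hlam : StrictMonoOn lam (Icc 0 T))
    (huv : ∀ j ≤ n, lam (u j) = v j) (hs : s ∈ Icc 0 T) : f s = f' (lam s) := by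
  rcases hs.2.eq_or_lt with rfl | hsT
  · rw [h.eq_last, ← h.time_last, huv n le_rfl, h'.time_last, h'.eq_last]
  · obtain ⟨j, hj, hjs, hsj⟩ := h.exists_mem_Ico ⟨hs.1, hsT⟩
    rw [h.eq_of_mem_Ico j hj s ⟨hjs, hsj⟩, h'.eq_of_mem_Ico j hj]
    rw [← huv j hj.le, ← huv (j + 1) hj]
    exact ⟨hlam.monotoneOn (h.time_mem_Icc hj.le) hs hjs, hlam hs (h.time_mem_Icc hj) hsj⟩

lemma time_eq_of_time_eq {n₁ n₂ j₁ j₂ : ℕ} {u₁ u₂ v₁ v₂ : ℕ → ℝ} {f₁ f₂ f₁' f₂' : ℝ → ℝ}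
    (h₁ : IsCountingFunction T n₁ u₁ f₁) (h₂ : IsCountingFunction T n₂ u₂ f₂)
    (h₁' : IsCountingFunction T n₁ v₁ f₁') (h₂' : IsCountingFunction T n₂ v₂ f₂')
    (hdistinct : ∀ a ∈ Ioo 0 n₁, ∀ b ∈ Ioo 0 n₂, u₁ a ≠ u₂ b)
    (hj₁ : j₁ ≤ n₁) (hj₂ : j₂ ≤ n₂) (heq : u₁ j₁ = u₂ j₂) : v₁ j₁ = v₂ j₂ := by
  rcases Nat.eq_zero_or_pos j₁ with rfl | hpos₁
  · have : j₂ = 0 := h₂.strictMonoOn_time.injOn hj₂ (Nat.zero_le n₂)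
      (by rw [← heq, h₁.time_zero, h₂.time_zero])
    rw [this, h₁'.time_zero, h₂'.time_zero]
  rcases hj₁.eq_or_lt with rfl | hlt₁
  · have : j₂ = n₂ := h₂.strictMonoOn_time.injOn hj₂ (le_refl n₂)
      (by rw [← heq, h₁.time_last, h₂.time_last])
    rw [this, h₁'.time_last, h₂'.time_last]
  have hinterior := h₁.time_mem_Ioo ⟨hpos₁, hlt₁⟩
  have hpos₂ : j₂ ≠ 0 := by
    rintro rfl
    exact hinterior.1.ne' (heq.trans h₂.time_zero)
  have hlt₂ : j₂ ≠ n₂ := by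
    rintro rfl
    exact hinterior.2.ne (heq.trans h₂.time_last)
  exact absurd heq (hdistinct j₁ ⟨hpos₁, hlt₁⟩ j₂ ⟨hpos₂.bot_lt, hj₂.lt_of_ne hlt₂⟩)

section Convergence

variable {α : Type*} {l : Filter α} {nN : α → ℕ} {uN : α → ℕ → ℝ} {fN : α → ℝ → ℝ}

lemma eventually_eq (h : IsCountingFunction T n u f)
    (hN : ∀ N, IsCountingFunction T (nN N) (uN N) (fN N)) (hs : s ∈ Icc 0 T)
    (hlim : Tendsto (fun N => fN N s) l (𝓝 (f s))) : ∀ᶠ N in l, fN N s = f s := by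
  obtain ⟨m, hm⟩ := h.exists_eq_natCast hs
  choose mN hmN using fun N => (hN N).exists_eq_natCast hs
  simp only [hm, hmN] at hlim ⊢
  have : Tendsto mN l (𝓝 m) := Nat.isClosedEmbedding_coe_real.tendsto_nhds_iff.2 hlim
  rw [nhds_discrete, tendsto_pure] at this
  exact this.mono fun N => congrArg Nat.cast

lemma eventually_length_eq (h : IsCountingFunction T n u f)
    (hN : ∀ N, IsCountingFunction T (nN N) (uN N) (fN N))
    (hlim : Tendsto (fun N => fN N T) l (𝓝 (f T))) : ∀ᶠ N in l, nN N = n := by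
  have hT : T ∈ Icc 0 T := h.time_last ▸ h.time_mem_Icc le_rfl
  filter_upwards [h.eventually_eq hN hT hlim] with N heq
  rw [(hN N).eq_last, h.eq_last, sub_left_inj] at heq
  exact_mod_cast heq

lemma tendsto_time {A : Set ℝ} (h : IsCountingFunction T n u f)
    (hN : ∀ N, IsCountingFunction T (nN N) (uN N) (fN N)) (hA : Icc 0 T ⊆ closure A)
    (hlim : ∀ s ∈ A, Tendsto (fun N => fN N s) l (𝓝 (f s)))
    (hlength : ∀ᶠ N in l, nN N = n) (hj : j ≤ n) :
    Tendsto (fun N => uN N j) l (𝓝 (u j)) := by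
  have time_le_iff_eventually : ∀ s ∈ A, s ∈ Ico 0 T → ∀ᶠ N in l, uN N j ≤ s ↔ u j ≤ s := by
    intro s hsA hs
    filter_upwards [h.eventually_eq hN (Ico_subset_Icc_self hs) (hlim s hsA), hlength]
      with N heq hlen
    rw [(hN N).time_le_iff (hlen ▸ hj) hs, h.time_le_iff hj hs, heq]
  have huj := h.time_mem_Icc hj
  rw [tendsto_order]
  constructor
  · intro x hx
    rcases lt_or_ge x 0 with hx0 | hx0
    · filter_upwards [hlength] with N hlen
      exact hx0.trans_le ((hN N).time_mem_Icc (hlen ▸ hj)).1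
    · obtain ⟨a, haA, hxa, hau⟩ := exists_mem_Ioo_of_Icc_subset_closure hA hx0 hx huj.2
      filter_upwards [time_le_iff_eventually a haA ⟨hx0.trans hxa.le, hau.trans_le huj.2⟩]
        with N hiff
      exact hxa.trans (not_le.1 fun hle => hau.not_ge (hiff.1 hle))
  · intro y hy
    rcases lt_or_ge T y with hTy | hyT
    · filter_upwards [hlength] with N hlen
      exact ((hN N).time_mem_Icc (hlen ▸ hj)).2.trans_lt hTy
    · obtain ⟨b, hbA, hub, hby⟩ := exists_mem_Ioo_of_Icc_subset_closure hA huj.1 hy hyT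
      filter_upwards [time_le_iff_eventually b hbA ⟨huj.1.trans hub.le, hby.trans_le hyT⟩]
        with N hiff
      exact (hiff.2 hub.le).trans_lt hby

end Convergence

end IsCountingFunction

/-- A time change of `[0, T]`: a continuous, strictly increasing bijection of `[0, T]` onto
itself, encoded as a function on `ℝ` whose values outside `[0, T]` are irrelevant. -/
structure IsTimeChange (T : ℝ) (lam : ℝ → ℝ) : Prop where
  continuousOn : ContinuousOn lam (Icc 0 T)
  strictMonoOn : StrictMonoOn lam (Icc 0 T)
  bijOn : BijOn lam (Icc 0 T) (Icc 0 T)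

section TimeChange

variable {T : ℝ} {ι : Type*}

lemma isTimeChange_id (T : ℝ) : IsTimeChange T id :=
  ⟨continuousOn_id, strictMono_id.strictMonoOn _, bijOn_id _⟩

lemma isTimeChange_of_strictMono {lam : ℝ → ℝ} (hT : 0 ≤ T) (hcont : Continuous lam)
    (hmono : StrictMono lam) (h0 : lam 0 = 0) (hlast : lam T = T) : IsTimeChange T lam := by
  refine ⟨hcont.continuousOn, hmono.strictMonoOn _, ?_, hmono.injective.injOn, ?_⟩
  · simpa only [h0, hlast] using hmono.monotone.mapsTo_Icc (a := 0) (b := T)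
  · simpa only [h0, hlast, SurjOn] using intermediate_value_Icc hT hcont.continuousOn

lemma strictMono_id_add_of_lipschitzWith {K : ℝ≥0} (hK : K < 1) {d : ℝ → ℝ}
    (hd : LipschitzWith K d) : StrictMono fun s => s + d s := by
  intro x y hxy
  have hle : d x - d y ≤ K * (y - x) :=
    calc d x - d y ≤ dist (d x) (d y) := le_abs_self _
      _ ≤ K * dist x y := hd.dist_le_mul x y
      _ = K * (y - x) := by rw [dist_comm, Real.dist_eq, abs_of_pos (sub_pos.2 hxy)]
  have hlt : K * (y - x) < y - x := mul_lt_of_lt_one_left (sub_pos.2 hxy) (mod_cast hK)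
  dsimp only
  linarith

lemma exists_isTimeChange_of_lipschitz {K : ℝ≥0} (hK : K < 1) {σ τ : ι → ℝ}
    (hd : ∀ p q, nndist (τ p - σ p) (τ q - σ q) ≤ K * nndist (σ p) (σ q))
    (hT : 0 ≤ T) {p₀ p₁ : ι} (hσ₀ : σ p₀ = 0) (hτ₀ : τ p₀ = 0) (hσ₁ : σ p₁ = T)
    (hτ₁ : τ p₁ = T) :
    ∃ lam, IsTimeChange T lam ∧ (∀ s ∈ Icc 0 T, |lam s - s| ≤ K * T) ∧
      ∀ p, lam (σ p) = τ p := by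
  have hfactors : (fun p => τ p - σ p).FactorsThrough σ := fun p q hpq =>
    nndist_eq_zero.1 (le_zero_iff.1 (by simpa only [hpq, nndist_self, mul_zero] using hd p q))
  have hext : ∀ p, Function.extend σ (fun p => τ p - σ p) 0 (σ p) = τ p - σ p :=
    hfactors.extend_apply 0
  have hlip : LipschitzOnWith K (Function.extend σ (fun p => τ p - σ p) 0) (range σ) := by
    refine LipschitzOnWith.of_dist_le_mul ?_
    rintro _ ⟨p, rfl⟩ _ ⟨q, rfl⟩
    rw [hext, hext]
    exact_mod_cast hd p q
  obtain ⟨d, hdlip, hdext⟩ := hlip.extend_real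
  have hdσ : ∀ p, d (σ p) = τ p - σ p := fun p => (hdext (mem_range_self p)).symm.trans (hext p)
  have hd₀ : d 0 = 0 := by simpa only [hσ₀, hτ₀, sub_zero] using hdσ p₀
  have hd₁ : d T = 0 := by simpa only [hσ₁, hτ₁, sub_self] using hdσ p₁
  refine ⟨fun s => s + d s, isTimeChange_of_strictMono hT (continuous_id.add hdlip.continuous)
    (strictMono_id_add_of_lipschitzWith hK hdlip) (by simp only [hd₀, add_zero])
    (by simp only [hd₁, add_zero]), fun s hs => ?_, fun p => by simp only [hdσ, add_sub_cancel]⟩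
  calc |s + d s - s| = dist (d s) (d 0) := by rw [add_sub_cancel_left, hd₀, Real.dist_0_eq_abs]
    _ ≤ K * dist s 0 := hdlip.dist_le_mul s 0
    _ = K * s := by rw [Real.dist_0_eq_abs, abs_of_nonneg hs.1]
    _ ≤ K * T := by gcongr; exact hs.2

/-- A Lipschitz constant for the displacement `σ p ↦ τ p - σ p` of a finite family of points: the
sum of all its difference quotients, which bounds their maximum and is manifestly continuous in
`σ`. Pairs with `σ p = σ q` contribute `0`, by the convention `x / 0 = 0`. -/
def displacementConstant [Fintype ι] (σ τ : ι → ℝ) : ℝ≥0 :=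
  ∑ p, ∑ q, nndist (τ p - σ p) (τ q - σ q) / nndist (σ p) (σ q)

lemma nndist_displacement_le [Fintype ι] {σ τ : ι → ℝ} (hστ : τ.FactorsThrough σ) (p q : ι) :
    nndist (τ p - σ p) (τ q - σ q) ≤ displacementConstant σ τ * nndist (σ p) (σ q) := by
  by_cases hpq : σ p = σ q
  · simp only [hpq, hστ hpq, nndist_self, mul_zero, le_refl]
  · rw [← div_le_iff₀ (pos_iff_ne_zero.2 (mt nndist_eq_zero.1 hpq))]
    calc nndist (τ p - σ p) (τ q - σ q) / nndist (σ p) (σ q)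
        ≤ ∑ q, nndist (τ p - σ p) (τ q - σ q) / nndist (σ p) (σ q) :=
          Finset.single_le_sum_of_canonicallyOrdered
            (f := fun q => nndist (τ p - σ p) (τ q - σ q) / nndist (σ p) (σ q))
            (Finset.mem_univ q)
      _ ≤ displacementConstant σ τ :=
          Finset.single_le_sum_of_canonicallyOrdered
            (f := fun p => ∑ q, nndist (τ p - σ p) (τ q - σ q) / nndist (σ p) (σ q))
            (Finset.mem_univ p)

variable {α : Type*} {l : Filter α} {σ : α → ι → ℝ} {τ : ι → ℝ}

lemma tendsto_displacementConstant [Fintype ι]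
    (hlim : ∀ p, Tendsto (fun N => σ N p) l (𝓝 (τ p)))
    (heq : ∀ p q, τ p = τ q → ∀ᶠ N in l, σ N p = σ N q) :
    Tendsto (fun N => displacementConstant (σ N) τ) l (𝓝 0) := by
  have hquotient : ∀ p q, Tendsto
      (fun N => nndist (τ p - σ N p) (τ q - σ N q) / nndist (σ N p) (σ N q)) l (𝓝 0) := by
    intro p q
    by_cases hpq : τ p = τ q
    · refine tendsto_const_nhds.congr' ?_
      filter_upwards [heq p q hpq] with N hN
      rw [hN, nndist_self, div_zero]
    · have hdisp : ∀ p, Tendsto (fun N => τ p - σ N p) l (𝓝 0) := fun p => by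
        simpa only [sub_self] using (hlim p).const_sub (τ p)
      simpa only [nndist_self, zero_div, Pi.div_def] using ((hdisp p).nndist (hdisp q)).div
        ((hlim p).nndist (hlim q)) (mt nndist_eq_zero.1 hpq)
  simpa only [displacementConstant, Finset.sum_const_zero] using
    tendsto_finsetSum Finset.univ fun p _ => tendsto_finsetSum Finset.univ fun q _ => hquotient p q

lemma eventually_factorsThrough [Finite ι]
    (hlim : ∀ p, Tendsto (fun N => σ N p) l (𝓝 (τ p))) : ∀ᶠ N in l, τ.FactorsThrough (σ N) := by
  simp only [Function.FactorsThrough, eventually_all]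
  intro p q
  by_cases hpq : τ p = τ q
  · exact .of_forall fun _ _ => hpq
  · filter_upwards [((hlim p).sub (hlim q)).eventually_ne (sub_ne_zero.2 hpq)] with N hne heq
    exact absurd (sub_eq_zero.2 heq) hne

lemma exists_isTimeChange_eventually_map_eq [Finite ι] (hT : 0 ≤ T)
    (hlim : ∀ p, Tendsto (fun N => σ N p) l (𝓝 (τ p)))
    (heq : ∀ p q, τ p = τ q → ∀ᶠ N in l, σ N p = σ N q) {p₀ p₁ : ι}
    (hτ₀ : τ p₀ = 0) (hσ₀ : ∀ᶠ N in l, σ N p₀ = 0)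
    (hτ₁ : τ p₁ = T) (hσ₁ : ∀ᶠ N in l, σ N p₁ = T) :
    ∃ lam : α → ℝ → ℝ, (∀ N, IsTimeChange T (lam N)) ∧
      (∀ ε > 0, ∀ᶠ N in l, ∀ s ∈ Icc 0 T, |lam N s - s| < ε) ∧
      ∀ᶠ N in l, ∀ p, lam N (σ N p) = τ p := by
  cases nonempty_fintype ι
  set K : α → ℝ≥0 := fun N => displacementConstant (σ N) τ
  have hK : Tendsto K l (𝓝 0) := tendsto_displacementConstant hlim heq
  have hlam : ∀ N, ∃ lam, IsTimeChange T lam ∧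
      (K N < 1 → τ.FactorsThrough (σ N) → σ N p₀ = 0 → σ N p₁ = T →
        (∀ s ∈ Icc 0 T, |lam s - s| ≤ K N * T) ∧ ∀ p, lam (σ N p) = τ p) := by
    intro N
    by_cases hN : K N < 1 ∧ τ.FactorsThrough (σ N) ∧ σ N p₀ = 0 ∧ σ N p₁ = T
    · obtain ⟨hKN, hfactors, h₀, h₁⟩ := hN
      obtain ⟨lam, hlam, hclose⟩ := exists_isTimeChange_of_lipschitz hKN
        (nndist_displacement_le hfactors) hT h₀ hτ₀ h₁ hτ₁
      exact ⟨lam, hlam, fun _ _ _ _ => hclose⟩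
    · exact ⟨id, isTimeChange_id T, fun hKN hfactors h₀ h₁ =>
        absurd ⟨hKN, hfactors, h₀, h₁⟩ hN⟩
  choose lam hlam hclose using hlam
  have hclose : ∀ᶠ N in l, (∀ s ∈ Icc 0 T, |lam N s - s| ≤ K N * T) ∧
      ∀ p, lam N (σ N p) = τ p := by
    filter_upwards [hK.eventually_lt_const one_pos, eventually_factorsThrough hlim, hσ₀, hσ₁]
      with N using hclose N
  refine ⟨lam, hlam, fun ε hε => ?_, hclose.mono fun _ => And.right⟩
  have hKT : Tendsto (fun N => (K N : ℝ) * T) l (𝓝 0) := by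
    simpa only [NNReal.coe_zero, zero_mul] using (NNReal.tendsto_coe.2 hK).mul_const T
  filter_upwards [hclose, hKT.eventually_lt_const hε] with N hN hlt s hs
  exact (hN.1 s hs).trans_lt hlt

end TimeChange

lemma exists_isTimeChange_eventually_eq_comp {ι α : Type*} [Finite ι] [Nonempty ι]
    {l : Filter α} {T : ℝ} {n : ι → ℕ} {t : ι → ℕ → ℝ} {g : ℝ → ι → ℝ}
    {tN : α → ι → ℕ → ℝ} {gN : α → ℝ → ι → ℝ}
    (h : ∀ i, IsCountingFunction T (n i) (t i) (g · i))
    (hN : ∀ᶠ N in l, ∀ i, IsCountingFunction T (n i) (tN N i) (gN N · i))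
    (htime : ∀ i, ∀ j ≤ n i, Tendsto (fun N => tN N i j) l (𝓝 (t i j)))
    (hdistinct : ∀ i₁ i₂, i₁ ≠ i₂ → ∀ j₁ ∈ Ioo 0 (n i₁), ∀ j₂ ∈ Ioo 0 (n i₂), t i₁ j₁ ≠ t i₂ j₂) :
    ∃ lam : α → ℝ → ℝ, (∀ N, IsTimeChange T (lam N)) ∧
      (∀ ε > 0, ∀ᶠ N in l, ∀ s ∈ Icc 0 T, |lam N s - s| < ε) ∧
      ∀ᶠ N in l, ∀ s ∈ Icc 0 T, gN N s = g (lam N s) := by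
  have hcoincide : ∀ p q : (i : ι) × Fin (n i + 1), t p.1 p.2 = t q.1 q.2 →
      ∀ᶠ N in l, tN N p.1 p.2 = tN N q.1 q.2 := by
    rintro ⟨i₁, j₁⟩ ⟨i₂, j₂⟩ heq
    filter_upwards [hN] with N hN
    by_cases hi : i₁ = i₂
    · subst hi
      exact congrArg (tN N i₁) ((h i₁).strictMonoOn_time.injOn j₁.is_le j₂.is_le heq)
    · exact (h i₁).time_eq_of_time_eq (h i₂) (hN i₁) (hN i₂)
        (hdistinct i₁ i₂ hi) j₁.is_le j₂.is_le heq
  obtain ⟨i⟩ := ‹Nonempty ι›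
  obtain ⟨lam, hlam, hclose, hmatch⟩ := exists_isTimeChange_eventually_map_eq
    (σ := fun N (p : (i : ι) × Fin (n i + 1)) => tN N p.1 p.2) (p₀ := ⟨i, 0⟩)
    (p₁ := ⟨i, Fin.last (n i)⟩) ((h i).time_last ▸ (h i).time_mem_Icc le_rfl).1
    (fun p => htime p.1 p.2 p.2.is_le) hcoincide
    (h i).time_zero (hN.mono fun N hN => (hN i).time_zero)
    (h i).time_last (hN.mono fun N hN => (hN i).time_last)
  refine ⟨lam, hlam, hclose, ?_⟩
  filter_upwards [hN, hmatch] with N hN hmatch s hs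
  funext i
  exact (hN i).eq_comp (h i) (hlam N).strictMonoOn
    (fun j hj => hmatch ⟨i, j, Nat.lt_succ_of_le hj⟩) hs

lemma skorokhodTendstoOn_of_eventually_eq_comp {E : Type*} [NormedAddCommGroup E] {T : ℝ}
    {x : ℕ → ℝ → E} {y : ℝ → E} {lam : ℕ → ℝ → ℝ} (hlam : ∀ N, IsTimeChange T (lam N))
    (hclose : ∀ ε > 0, ∀ᶠ N in atTop, ∀ s ∈ Icc 0 T, |lam N s - s| < ε)
    (hcomp : ∀ᶠ N in atTop, ∀ s ∈ Icc 0 T, x N s = y (lam N s)) : SkorokhodTendstoOn x y T := by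
  refine ⟨lam, fun N => (hlam N).continuousOn, fun N => (hlam N).strictMonoOn,
    fun N => (hlam N).bijOn, hclose, fun ε hε => ?_⟩
  filter_upwards [hcomp] with N heq s hs
  rwa [heq s hs, sub_self, norm_zero]

/-- Convergence of piecewise-constant counting-type functions: if the step functions `g_N`
converge pointwise to `g` on a dense subset of `[0,T]` containing `T`, and the jump times of the
distinct coordinates of `g` are pairwise distinct, then the numbers of jumps stabilize, the jump
times converge, and `g_N → g` in the Skorokhod sense on `[0,T]` (indeed `g_N = g ∘ λ_N`
eventually). -/
theorem statement1 (T : ℝ) (hT : 0 < T) (k : ℕ) (hk : 1 ≤ k)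
    (n : Fin k → ℕ) (hn : ∀ i, 1 ≤ n i)
    (t : Fin k → ℕ → ℝ)
    (ht0 : ∀ i, t i 0 = 0) (htT : ∀ i, t i (n i) = T)
    (htmono : ∀ i, ∀ j < n i, t i j < t i (j + 1))
    (nN : ℕ → Fin k → ℕ) (hnN : ∀ N i, 1 ≤ nN N i)
    (tN : ℕ → Fin k → ℕ → ℝ)
    (htN0 : ∀ N i, tN N i 0 = 0) (htNT : ∀ N i, tN N i (nN N i) = T)
    (htNmono : ∀ N i, ∀ j < nN N i, tN N i j < tN N i (j + 1))
    (g : ℝ → Fin k → ℝ) (gN : ℕ → ℝ → Fin k → ℝ)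
    (hg : ∀ i, ∀ j < n i, ∀ s ∈ Set.Ico (t i j) (t i (j + 1)), g s i = j)
    (hgT : ∀ i, g T i = n i - 1)
    (hgN : ∀ N i, ∀ j < nN N i, ∀ s ∈ Set.Ico (tN N i j) (tN N i (j + 1)), gN N s i = j)
    (hgNT : ∀ N i, gN N T i = nN N i - 1)
    (A : Set ℝ) (hA_sub : A ⊆ Set.Icc 0 T) (hA_dense : Set.Icc 0 T ⊆ closure A)
    (hTA : T ∈ A)
    (hptwise : ∀ s ∈ A, Filter.Tendsto (fun N => gN N s) Filter.atTop (nhds (g s)))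
    (hdistinct : ∀ i₁ i₂ : Fin k, i₁ ≠ i₂ →
      ∀ j₁ j₂ : ℕ, 1 ≤ j₁ → j₁ ≤ n i₁ - 1 → 1 ≤ j₂ → j₂ ≤ n i₂ - 1 →
        t i₁ j₁ ≠ t i₂ j₂) :
    (∀ᶠ N in Filter.atTop, ∀ i, nN N i = n i) ∧
    (∀ i : Fin k, ∀ j : ℕ, 1 ≤ j → j ≤ n i - 1 →
      Filter.Tendsto (fun N => tN N i j) Filter.atTop (nhds (t i j))) ∧
    (∃ lam : ℕ → ℝ → ℝ,
      (∀ N, ContinuousOn (lam N) (Set.Icc 0 T)) ∧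
      (∀ N, StrictMonoOn (lam N) (Set.Icc 0 T)) ∧
      (∀ N, Set.BijOn (lam N) (Set.Icc 0 T) (Set.Icc 0 T)) ∧
      (∀ ε > 0, ∀ᶠ N in Filter.atTop, ∀ s ∈ Set.Icc 0 T, |lam N s - s| < ε) ∧
      (∀ᶠ N in Filter.atTop, ∀ s ∈ Set.Icc 0 T, gN N s = g (lam N s))) ∧
    SkorokhodTendstoOn gN g T := by
  have : Nonempty (Fin k) := ⟨⟨0, hk⟩⟩
  have h : ∀ i, IsCountingFunction T (n i) (t i) (g · i) := fun i =>
    ⟨hn i, ht0 i, htT i, htmono i, hg i, hgT i⟩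
  have hN : ∀ N i, IsCountingFunction T (nN N i) (tN N i) (gN N · i) := fun N i =>
    ⟨hnN N i, htN0 N i, htNT N i, htNmono N i, hgN N i, hgNT N i⟩
  have hlim : ∀ i, ∀ s ∈ A, Tendsto (fun N => gN N s i) atTop (𝓝 (g s i)) := fun i s hs =>
    tendsto_pi_nhds.1 (hptwise s hs) i
  have hlength : ∀ i, ∀ᶠ N in atTop, nN N i = n i := fun i =>
    (h i).eventually_length_eq (hN · i) (hlim i T hTA)
  have htime : ∀ i, ∀ j ≤ n i, Tendsto (fun N => tN N i j) atTop (𝓝 (t i j)) := fun i j hj =>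
    (h i).tendsto_time (hN · i) hA_dense (hlim i) (hlength i) hj
  have hN_length : ∀ᶠ N in atTop, ∀ i, IsCountingFunction T (n i) (tN N i) (gN N · i) :=
    (eventually_all.2 hlength).mono fun N hlen i => hlen i ▸ hN N i
  obtain ⟨lam, hlam, hclose, hcomp⟩ := exists_isTimeChange_eventually_eq_comp h hN_length htime
    fun i₁ i₂ hi j₁ hj₁ j₂ hj₂ =>
      hdistinct i₁ i₂ hi j₁ j₂ hj₁.1 (Nat.le_pred_of_lt hj₁.2) hj₂.1 (Nat.le_pred_of_lt hj₂.2)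
  exact ⟨eventually_all.2 hlength, fun i j _ hj => htime i j (hj.trans (Nat.sub_le _ _)),
    ⟨lam, fun N => (hlam N).continuousOn, fun N => (hlam N).strictMonoOn,
      fun N => (hlam N).bijOn, hclose, hcomp⟩,
    skorokhodTendstoOn_of_eventually_eq_comp hlam hclose hcomp⟩
end
end

section
/- Let T > 0, let x, x_1, x_2, … : [0,T] → ℝ be càdlàg functions with (x_k) converging to x in the Skorokhod sense on [0,T], and let τ ∈ (0,T) be a continuity point of x. Let (τ_k) be a sequence in (0,T) with τ_k → τ, and let (ζ_k) be a sequence of reals with ζ_k → ζ where ζ ≠ x(τ). Then for all k large enough, the indicator 1{ζ_k ≤ x_k(τ_k−)} equals 1{ζ ≤ x(τ)}; in particular 1{ζ_k ≤ x_k(τ_k−)} → 1{ζ ≤ x(τ)}. -/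
open MeasureTheory Filter Topology Set

noncomputable section

/-- `x` is càdlàg on `[0,T]`: right-continuous at every point of `[0,T)`
and with a left limit at every point of `(0,T]`. -/
def CadlagOn (x : ℝ → ℝ) (T : ℝ) : Prop :=
  (∀ t ∈ Set.Ico 0 T, ContinuousWithinAt x (Set.Icc t T) t) ∧
  (∀ t ∈ Set.Ioc 0 T, ∃ L : ℝ, Filter.Tendsto x (nhdsWithin t (Set.Iio t)) (nhds L))

/-!
Read `(k, t) ↦ xₖ(t)` as a function of two variables. Since `xₖ` is uniformly close to `x ∘ λₖ` and
`λₖ` to the identity, continuity of `x` at `τ` makes `xₖ(t)` converge to `x(τ)` as `k → ∞` and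
`t → τ` jointly and independently. Such a joint limit is inherited by the one-sided limits
`xₖ(τₖ−)`, because a regular space has a basis of closed neighbourhoods. Comparing two sequences
with distinct limits eventually gives the same answer as comparing the limits.
-/

theorem tendsto_dist_prod_principal_of_forall_dist_lt {ι α Y : Type*} [PseudoMetricSpace Y]
    {l : Filter ι} {s : Set α} {f g : ι → α → Y}
    (h : ∀ ε > 0, ∀ᶠ k in l, ∀ t ∈ s, dist (f k t) (g k t) < ε) :
    Tendsto (fun p : ι × α => dist (f p.1 p.2) (g p.1 p.2)) (l ×ˢ 𝓟 s) (𝓝 0) := by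
  refine Metric.tendsto_nhds.2 fun ε hε => eventually_prod_principal_iff.2 ?_
  simpa only [dist_zero_right, Real.norm_of_nonneg dist_nonneg] using h ε hε

theorem tendsto_limits_of_tendsto_prod_nhdsWithin {ι X Y : Type*} [TopologicalSpace X]
    [TopologicalSpace Y] [RegularSpace Y] {l : Filter ι} {f : ι → X → Y} {s : Set X} {a : X} {y : Y}
    (hf : Tendsto (fun p : ι × X => f p.1 p.2) (l ×ˢ 𝓝[s] a) (𝓝 y))
    {u : ι → X} (hu : Tendsto u l (𝓝 a))
    {m : ι → Filter X} [∀ k, NeBot (m k)] (hm : ∀ k, m k ≤ 𝓝[s] (u k))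
    {z : ι → Y} (hz : ∀ k, Tendsto (f k) (m k) (𝓝 (z k))) :
    Tendsto z l (𝓝 y) := by
  refine (closed_nhds_basis y).tendsto_right_iff.2 fun V ⟨hV, hV_closed⟩ => ?_
  obtain ⟨p, hp, q, hq, hpq⟩ := eventually_prod_iff.1 (hf.eventually_mem hV)
  have hq_near : ∀ᶠ k in l, ∀ᶠ t in 𝓝[s] (u k), q t :=
    hu.eventually (eventually_nhds_nhdsWithin.2 hq)
  filter_upwards [hp, hq_near] with k hpk hqk
  exact hV_closed.mem_of_tendsto (hz k) ((hqk.filter_mono (hm k)).mono fun t ht => hpq hpk ht)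

theorem eventually_le_iff_le_of_tendsto_of_ne {ι α : Type*} [TopologicalSpace α] [LinearOrder α]
    [OrderClosedTopology α] {l : Filter ι} {u v : ι → α} {a b : α}
    (hu : Tendsto u l (𝓝 a)) (hv : Tendsto v l (𝓝 b)) (hab : a ≠ b) :
    ∀ᶠ k in l, (u k ≤ v k ↔ a ≤ b) := by
  rcases hab.lt_or_gt with hlt | hgt
  · exact (hu.eventually_lt hv hlt).mono fun k hk => iff_of_true hk.le hlt.le
  · exact (hv.eventually_lt hu hgt).mono fun k hk => iff_of_false hk.not_ge hgt.not_ge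

namespace SkorokhodTendstoOn

variable {E : Type*} [NormedAddCommGroup E] {x : ℕ → ℝ → E} {y : ℝ → E} {T τ : ℝ}

theorem tendsto_prod_nhdsWithin (h : SkorokhodTendstoOn x y T)
    (hy : ContinuousWithinAt y (Icc 0 T) τ) :
    Tendsto (fun p : ℕ × ℝ => x p.1 p.2) (atTop ×ˢ 𝓝[Icc 0 T] τ) (𝓝 (y τ)) := by
  obtain ⟨lam, -, -, lam_bij, lam_near_id, x_near⟩ := h
  have le_principal : atTop ×ˢ 𝓝[Icc 0 T] τ ≤ (atTop : Filter ℕ) ×ˢ 𝓟 (Icc 0 T) :=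
    prod_mono_right _ inf_le_right
  have snd_tendsto : Tendsto Prod.snd ((atTop : Filter ℕ) ×ˢ 𝓝[Icc 0 T] τ) (𝓝 τ) :=
    tendsto_snd.mono_right nhdsWithin_le_nhds
  have dist_lam : Tendsto (fun p : ℕ × ℝ => dist p.2 (lam p.1 p.2))
      (atTop ×ˢ 𝓝[Icc 0 T] τ) (𝓝 0) := by
    simp only [← Real.dist_eq, dist_comm (lam _ _)] at lam_near_id
    exact (tendsto_dist_prod_principal_of_forall_dist_lt lam_near_id).mono_left le_principal
  have dist_x : Tendsto (fun p : ℕ × ℝ => dist (y (lam p.1 p.2)) (x p.1 p.2))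
      (atTop ×ˢ 𝓝[Icc 0 T] τ) (𝓝 0) := by
    simp only [← dist_eq_norm, dist_comm (x _ _)] at x_near
    exact (tendsto_dist_prod_principal_of_forall_dist_lt x_near).mono_left le_principal
  have lam_mem : ∀ᶠ p : ℕ × ℝ in atTop ×ˢ 𝓝[Icc 0 T] τ, lam p.1 p.2 ∈ Icc 0 T :=
    (tendsto_snd.eventually_mem self_mem_nhdsWithin).mono fun p hp => (lam_bij p.1).mapsTo hp
  have lam_tendsto : Tendsto (fun p : ℕ × ℝ => lam p.1 p.2)
      (atTop ×ˢ 𝓝[Icc 0 T] τ) (𝓝[Icc 0 T] τ) :=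
    tendsto_nhdsWithin_iff.2 ⟨snd_tendsto.congr_dist dist_lam, lam_mem⟩
  exact (hy.tendsto.comp lam_tendsto).congr_dist dist_x

theorem tendsto_left_limits (h : SkorokhodTendstoOn x y T)
    (hy : ContinuousWithinAt y (Icc 0 T) τ) {u : ℕ → ℝ} (hu_mem : ∀ k, u k ∈ Ioc 0 T)
    (hu : Tendsto u atTop (𝓝 τ)) {z : ℕ → E} (hz : ∀ k, Tendsto (x k) (𝓝[<] (u k)) (𝓝 (z k))) :
    Tendsto z atTop (𝓝 (y τ)) :=
  tendsto_limits_of_tendsto_prod_nhdsWithin (h.tendsto_prod_nhdsWithin hy) hu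
    (fun k => nhdsWithin_le_iff.2 (Icc_mem_nhdsLT_of_mem (hu_mem k))) hz

end SkorokhodTendstoOn

theorem statement3_general {T : ℝ} {x : ℝ → ℝ} {xk : ℕ → ℝ → ℝ} (hconv : SkorokhodTendstoOn xk x T)
    {τ : ℝ} (hcont : ContinuousWithinAt x (Icc 0 T) τ)
    {τk : ℕ → ℝ} (hτk : ∀ k, τk k ∈ Ioc 0 T) (hτk_lim : Tendsto τk atTop (𝓝 τ))
    {xl : ℕ → ℝ} (hxl : ∀ k, Tendsto (xk k) (𝓝[<] (τk k)) (𝓝 (xl k)))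
    {ζ : ℝ} {ζk : ℕ → ℝ} (hζk_lim : Tendsto ζk atTop (𝓝 ζ)) (hζ : ζ ≠ x τ) :
    (∀ᶠ k in atTop, (if ζk k ≤ xl k then (1 : ℝ) else 0) = if ζ ≤ x τ then (1 : ℝ) else 0) ∧
    Tendsto (fun k => if ζk k ≤ xl k then (1 : ℝ) else 0) atTop
      (𝓝 (if ζ ≤ x τ then (1 : ℝ) else 0)) := by
  have xl_tendsto : Tendsto xl atTop (𝓝 (x τ)) :=
    hconv.tendsto_left_limits hcont hτk hτk_lim hxl
  have indicator_eq : ∀ᶠ k in atTop,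
      (if ζk k ≤ xl k then (1 : ℝ) else 0) = if ζ ≤ x τ then (1 : ℝ) else 0 :=
    (eventually_le_iff_le_of_tendsto_of_ne hζk_lim xl_tendsto hζ).mono fun k hk => by
      simp only [hk]
  exact ⟨indicator_eq, tendsto_nhds_of_eventually_eq indicator_eq⟩

/-- If càdlàg `x_k → x` in the Skorokhod sense on `[0,T]`, `τ_k → τ ∈ (0,T)` with `x` continuous
at `τ`, and `ζ_k → ζ` with `ζ ≠ x(τ)`, then eventually
`1{ζ_k ≤ x_k(τ_k−)} = 1{ζ ≤ x(τ)}`; in particular the indicators converge.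
Here `xl k s` denotes the left limit of `x_k` at `s`. -/
theorem statement3 (T : ℝ) (hT : 0 < T)
    (x : ℝ → ℝ) (xk : ℕ → ℝ → ℝ) (xl : ℕ → ℝ → ℝ)
    (hx : CadlagOn x T) (hxk : ∀ k, CadlagOn (xk k) T)
    (hxl : ∀ k, ∀ s ∈ Set.Ioc 0 T,
      Filter.Tendsto (xk k) (nhdsWithin s (Set.Iio s)) (nhds (xl k s)))
    (hconv : SkorokhodTendstoOn xk x T)
    (τ : ℝ) (hτ : τ ∈ Set.Ioo 0 T)
    (hcont : ContinuousWithinAt x (Set.Icc 0 T) τ)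
    (τk : ℕ → ℝ) (hτk : ∀ k, τk k ∈ Set.Ioo 0 T)
    (hτk_lim : Filter.Tendsto τk Filter.atTop (nhds τ))
    (ζ : ℝ) (ζk : ℕ → ℝ)
    (hζk_lim : Filter.Tendsto ζk Filter.atTop (nhds ζ))
    (hζ : ζ ≠ x τ) :
    (∀ᶠ k in Filter.atTop,
      (if ζk k ≤ xl k (τk k) then (1 : ℝ) else 0) = (if ζ ≤ x τ then (1 : ℝ) else 0)) ∧
    Filter.Tendsto (fun k => if ζk k ≤ xl k (τk k) then (1 : ℝ) else 0) Filter.atTop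
      (nhds (if ζ ≤ x τ then (1 : ℝ) else 0)) :=
  statement3_general hconv hcont (fun k => Ioo_subset_Ioc_self (hτk k)) hτk_lim
    (fun k => hxl k (τk k) (Ioo_subset_Ioc_self (hτk k))) hζk_lim hζ
end
end

section
/- Let π := δ_{(1,1)} be the Dirac point measure at (1,1) on ℝ≥0 × ℝ≥0, let x : ℝ≥0 → ℝ be the constant function 1, and for n ≥ 1 define the continuous function x^n : ℝ≥0 → ℝ by x^n(t) = 1 for t ∈ [0, 1/2], x^n(t) = 1 − (2/n)(t − 1/2) for t ∈ [1/2, 1], x^n(t) = 1 − 1/n + (2/n)(t − 1) for t ∈ [1, 3/2], and x^n(t) = 1 for t ≥ 3/2 (so x^n dips linearly from 1 down to 1 − 1/n at t = 1 and back). Then: (1) sup_{t≥0} |x(t) − x^n(t)| = 1/n → 0; (2) Φ(x, π)(t) = 1 for t ≥ 1 and Φ(x, π)(t) = 0 for 0 ≤ t < 1; (3) Φ(x^n, π)(t) = 0 for every t ≥ 0 and every n ≥ 1. In particular, x^n → x uniformly but Φ(x^n, π)(t) does not converge to Φ(x, π)(t) for t ≥ 1, so the thinning map Φ is not continuous at (x,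 π). -/
open MeasureTheory Filter Topology Set ENNReal NNReal

noncomputable section

/-- The thinning `Φ(x, π)(t) = π({(s,z) : s ≤ t, z ≤ x(s−)})`, where `xl` is the
left-limit function of `x` (here the processes are continuous, so `xl` is the process itself). -/
def Phi (xl : ℝ → ℝ) (π : Measure (ℝ × ℝ)) (t : ℝ) : ℝ≥0∞ :=
  π {p : ℝ × ℝ | 0 ≤ p.1 ∧ p.1 ≤ t ∧ 0 ≤ p.2 ∧ p.2 ≤ xl p.1}

/-- The function `x^n`: equal to `1` off `[1/2, 3/2]`, dipping linearly to `1 − 1/n` at `t = 1`. -/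
def xApprox (n : ℕ) (t : ℝ) : ℝ :=
  if t ≤ 1 / 2 then 1
  else if t ≤ 1 then 1 - (2 / n) * (t - 1 / 2)
  else if t ≤ 3 / 2 then 1 - 1 / n + (2 / n) * (t - 1)
  else 1

/-! The atom of `δ_{(s, z)}` is counted by `Φ(x, δ_{(s, z)})(t)` exactly when `s ≤ t` and
`z ≤ x(s)`. When it lies on the graph of `x`, pushing `x` down at `s`, by however little, makes the
atom disappear, so uniformly small perturbations change `Φ` by `1`. The functions `x^n` do this at
`(1, 1)`: they subtract from `1` a tent of height `1/n` with peak at `t = 1`. -/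

theorem Phi_dirac {s z : ℝ} (hs : 0 ≤ s) (hz : 0 ≤ z) (x : ℝ → ℝ) (t : ℝ) :
    Phi x (Measure.dirac (s, z)) t = if s ≤ t ∧ z ≤ x s then 1 else 0 := by
  simp [Phi, Set.indicator_apply, hs, hz]

theorem not_tendsto_Phi_dirac {ι : Type*} {l : Filter ι} {x : ℝ → ℝ} {y : ι → ℝ → ℝ} {s z t : ℝ}
    (hs : 0 ≤ s) (hz : 0 ≤ z) (hst : s ≤ t) (hx : z ≤ x s) (hy : ∃ᶠ i in l, y i s < z) :
    ¬ Tendsto (fun i => Phi (y i) (Measure.dirac (s, z)) t) l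
      (𝓝 (Phi x (Measure.dirac (s, z)) t)) := by
  intro hlim
  have hone : Phi x (Measure.dirac (s, z)) t = 1 := by rw [Phi_dirac hs hz, if_pos ⟨hst, hx⟩]
  have hne : ∀ᶠ i in l, Phi (y i) (Measure.dirac (s, z)) t ≠ 0 :=
    hlim.eventually_ne (hone ▸ one_ne_zero)
  obtain ⟨i, hi, hi_ne⟩ := (hy.and_eventually hne).exists
  exact hi_ne (by rw [Phi_dirac hs hz, if_neg fun h => hi.not_ge h.2])

theorem one_sub_xApprox (n : ℕ) (t : ℝ) :
    1 - xApprox n t = 1 / n * max 0 (1 - 2 * |t - 1|) := by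
  unfold xApprox
  split_ifs with h₁ h₂ h₃
  · rw [abs_of_nonpos (by linarith), max_eq_left (by linarith)]; ring
  · rw [abs_of_nonpos (by linarith), max_eq_right (by linarith)]; ring
  · rw [abs_of_nonneg (by linarith), max_eq_right (by linarith)]; ring
  · rw [abs_of_nonneg (by linarith), max_eq_left (by linarith)]; ring

theorem one_sub_xApprox_one (n : ℕ) : 1 - xApprox n 1 = 1 / n := by
  simp [one_sub_xApprox]

theorem xApprox_one_lt_one {n : ℕ} (hn : 1 ≤ n) : xApprox n 1 < 1 := by
  rw [← sub_pos, one_sub_xApprox_one]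
  exact one_div_pos.2 (Nat.cast_pos.2 hn)

theorem abs_one_sub_xApprox_le (n : ℕ) (t : ℝ) : |1 - xApprox n t| ≤ 1 / n := by
  have htent : max 0 (1 - 2 * |t - 1|) ≤ 1 :=
    max_le zero_le_one (by linarith [abs_nonneg (t - 1)])
  rw [one_sub_xApprox, abs_of_nonneg (by positivity)]
  exact mul_le_of_le_one_right (by positivity) htent

theorem isGreatest_abs_one_sub_xApprox (n : ℕ) :
    IsGreatest (range fun t : Ici (0 : ℝ) => |1 - xApprox n t|) (1 / n) := by
  refine ⟨⟨⟨1, mem_Ici.2 zero_le_one⟩, ?_⟩, forall_mem_range.2 fun t => abs_one_sub_xApprox_le n t⟩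
  simp only [one_sub_xApprox_one]
  exact abs_of_nonneg (by positivity)

theorem iSup_abs_one_sub_xApprox (n : ℕ) :
    ⨆ t : Ici (0 : ℝ), |1 - xApprox n t| = 1 / n :=
  (isGreatest_abs_one_sub_xApprox n).csSup_eq

/-- The counterexample: with `π = δ_{(1,1)}` and `x ≡ 1`, the functions `x^n` converge to `x`
uniformly on `ℝ≥0` (with `sup |x − x^n| = 1/n`), yet `Φ(x^n, π) ≡ 0` while `Φ(x, π)(t) = 1`
for `t ≥ 1`; hence `Φ` is not continuous at `(x, π)`. -/
theorem statement12 :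
    (∀ n : ℕ, 1 ≤ n →
      (⨆ t : Set.Ici (0:ℝ), |(1 : ℝ) - xApprox n t|) = 1 / n) ∧
    Filter.Tendsto (fun n : ℕ => ⨆ t : Set.Ici (0:ℝ), |(1 : ℝ) - xApprox n t|)
      Filter.atTop (nhds 0) ∧
    (∀ t : ℝ, 0 ≤ t →
      Phi (fun _ => 1) (Measure.dirac ((1:ℝ), (1:ℝ))) t = if 1 ≤ t then 1 else 0) ∧
    (∀ n : ℕ, 1 ≤ n → ∀ t : ℝ, 0 ≤ t →
      Phi (xApprox n) (Measure.dirac ((1:ℝ), (1:ℝ))) t = 0) ∧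
    (∀ t : ℝ, 1 ≤ t →
      ¬ Filter.Tendsto (fun n : ℕ => Phi (xApprox n) (Measure.dirac ((1:ℝ), (1:ℝ))) t)
        Filter.atTop (nhds (Phi (fun _ => 1) (Measure.dirac ((1:ℝ), (1:ℝ))) t))) := by
  refine ⟨fun n _ => iSup_abs_one_sub_xApprox n, ?_, fun t _ => ?_, fun n hn t _ => ?_,
    fun t ht => ?_⟩
  · simpa only [iSup_abs_one_sub_xApprox] using tendsto_one_div_atTop_nhds_zero_nat (𝕜 := ℝ)
  · simp only [Phi_dirac zero_le_one zero_le_one, le_refl, and_true]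
  · rw [Phi_dirac zero_le_one zero_le_one, if_neg fun h => (xApprox_one_lt_one hn).not_ge h.2]
  · have hlt : ∀ᶠ n in atTop, xApprox n 1 < 1 :=
      (eventually_ge_atTop 1).mono fun _ hn => xApprox_one_lt_one hn
    exact not_tendsto_Phi_dirac zero_le_one zero_le_one ht le_rfl hlt.frequently
end
end
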